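/- Bounds on V and U/V over the constraint polygon: for every (φ, β₁) ∈ D, one has V(φ, β₁) ≥ 1 + (0.33018)²/(3·0.21782·(2·0.33018 + 3·0.21782)) (= 1.126983…), and U(φ, β₁)/V(φ, β₁) ≤ 9·(2·(1 − 0.21782) − 0.33018)·(0.21782)²/(0.33018·(0.33018 + 3·0.21782)²) (= 1.64966…). -/

import Mathlib

/-- `U(φ, β₁) = 9(1−φ)β₃/(Y β₂)` where `β₂ = 3(1−φ) − 2β₁`, `β₃ = β₁ − 2 + 3φ`,
`Y = 3φ − β₁`. -/
noncomputable def Ufun (φ β₁ : ℝ) : ℝ :=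
  9 * (1 - φ) * (β₁ - 2 + 3 * φ) / ((3 * φ - β₁) * (3 * (1 - φ) - 2 * β₁))

/-- `V(φ, β₁) = 1 + β₂²/(3 Y β₃)`. -/
noncomputable def Vfun (φ β₁ : ℝ) : ℝ :=
  1 + (3 * (1 - φ) - 2 * β₁) ^ 2 / (3 * (3 * φ - β₁) * (β₁ - 2 + 3 * φ))

/-- The constraint polygon `D` for the pair `(φ, β₁)`. -/
def Dset : Set (ℝ × ℝ) :=
  {q | 0.525245 ≤ q.1 ∧ q.1 ≤ 0.619063 ∧ 0.33018 ≤ q.2 ∧ q.2 ≤ 0.52891 ∧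
    0.33018 ≤ 3 * (1 - q.1) - 2 * q.2 ∧ 3 * (1 - q.1) - 2 * q.2 ≤ 0.52891 ∧
    0.077639 ≤ q.2 - 2 + 3 * q.1 ∧ q.2 - 2 + 3 * q.1 ≤ 0.21782}

/-!
Since `Y = 2 β₂ + 3 β₃` and `3 (1 - φ) = 2 - β₂ - 2 β₃`, both `V` and `U / V` are functions of
`(β₂, β₃)` alone. With `t = β₃ / β₂` one has `V = 1 + 1 / (3 t (2 + 3 t))`, which decreases in `t`.
The quotient `U / V = 9 (2 (1 - β₃) - β₂) β₃² / (β₂ (β₂ + 3 β₃)²)` decreases in `β₂`, and it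
increases in `β₃` as long as `3 β₃ (β₂ + β₃) ≤ β₂ (2 - β₂)`, which is the sign condition on its
logarithmic derivative. Both extrema are therefore attained at the smallest `β₂` and the
largest `β₃`.
-/

/-- The quantity `U` in the coordinates `b = β₂`, `c = β₃`. -/
noncomputable def uOfBeta (b c : ℝ) : ℝ :=
  3 * (2 * (1 - c) - b) * c / ((2 * b + 3 * c) * b)

/-- The quantity `V` in the coordinates `b = β₂`, `c = β₃`. -/
noncomputable def vOfBeta (b c : ℝ) : ℝ :=
  1 + b ^ 2 / (3 * c * (2 * b + 3 * c))

/-- The quotient `U / V` in the coordinates `b = β₂`, `c = β₃`, with the common factor `Y`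
cancelled. -/
noncomputable def uDivVOfBeta (b c : ℝ) : ℝ :=
  9 * (2 * (1 - c) - b) * c ^ 2 / (b * (b + 3 * c) ^ 2)

section Coordinates

variable {φ β₁ b c : ℝ}

lemma Y_eq_two_mul_add_three_mul :
    3 * φ - β₁ = 2 * (3 * (1 - φ) - 2 * β₁) + 3 * (β₁ - 2 + 3 * φ) := by
  ring

lemma Vfun_eq_vOfBeta :
    Vfun φ β₁ = vOfBeta (3 * (1 - φ) - 2 * β₁) (β₁ - 2 + 3 * φ) := by
  rw [Vfun, vOfBeta, ← Y_eq_two_mul_add_three_mul, mul_right_comm]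

lemma Ufun_eq_uOfBeta :
    Ufun φ β₁ = uOfBeta (3 * (1 - φ) - 2 * β₁) (β₁ - 2 + 3 * φ) := by
  rw [Ufun, uOfBeta, ← Y_eq_two_mul_add_three_mul]
  congr 1
  ring

lemma vOfBeta_eq_sq_div (hb : 0 < b) (hc : 0 < c) :
    vOfBeta b c = (b + 3 * c) ^ 2 / (3 * c * (2 * b + 3 * c)) := by
  rw [vOfBeta]
  field_simp
  ring

lemma uOfBeta_div_vOfBeta (hb : 0 < b) (hc : 0 < c) :
    uOfBeta b c / vOfBeta b c = uDivVOfBeta b c := by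
  rw [vOfBeta_eq_sq_div hb hc, uOfBeta, uDivVOfBeta]
  field_simp
  ring

lemma vOfBeta_eq_one_add_one_div (hb : 0 < b) (hc : 0 < c) :
    vOfBeta b c = 1 + 1 / (3 * (c / b) * (2 + 3 * (c / b))) := by
  rw [vOfBeta]
  field_simp

end Coordinates

section Monotonicity

variable {b b' c c' : ℝ}

lemma vOfBeta_le_vOfBeta (hb : 0 < b) (hbb' : b ≤ b') (hc' : 0 < c') (hcc' : c' ≤ c) :
    vOfBeta b c ≤ vOfBeta b' c' := by
  have hb' : 0 < b' := hb.trans_le hbb'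
  have hc : 0 < c := hc'.trans_le hcc'
  have h_ratio : c' / b' ≤ c / b := div_le_div₀ hc.le hcc' hb hbb'
  rw [vOfBeta_eq_one_add_one_div hb hc, vOfBeta_eq_one_add_one_div hb' hc']
  gcongr

lemma uDivVOfBeta_anti_left (hb : 0 < b) (hbb' : b ≤ b') (hc : 0 ≤ c)
    (h_num : 0 ≤ 2 * (1 - c) - b) : uDivVOfBeta b' c ≤ uDivVOfBeta b c := by
  have hb' : 0 < b' := hb.trans_le hbb'
  unfold uDivVOfBeta
  gcongr

lemma uDivVOfBeta_mono_right (hb : 0 < b) (hc : 0 ≤ c) (hcc' : c ≤ c')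
    (h_deriv : 3 * c' * (b + c') ≤ b * (2 - b)) : uDivVOfBeta b c ≤ uDivVOfBeta b c' := by
  have hc' : 0 ≤ c' := hc.trans hcc'
  have h_diff : 0 ≤ c' - c := sub_nonneg.mpr hcc'
  have h_deriv' : 0 ≤ b * (2 - b) - 3 * c' * (b + c') := sub_nonneg.mpr h_deriv
  have h_cross : (2 * (1 - c) - b) * c ^ 2 * (b + 3 * c') ^ 2 ≤
      (2 * (1 - c') - b) * c' ^ 2 * (b + 3 * c) ^ 2 := by
    rw [← sub_nonneg]
    calc
      0 ≤ (c' - c) * ((b * (2 - b) - 3 * c' * (b + c')) * (b * (c + c') + 6 * c * c') +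
            (c' - c) * (b ^ 2 * (c' + 2 * c) + 3 * b * c' * (c' + 4 * c) + 18 * c * c' ^ 2)) :=
        mul_nonneg h_diff (add_nonneg (mul_nonneg h_deriv' (by positivity))
          (mul_nonneg h_diff (by positivity)))
      _ = (2 * (1 - c') - b) * c' ^ 2 * (b + 3 * c) ^ 2 -
            (2 * (1 - c) - b) * c ^ 2 * (b + 3 * c') ^ 2 := by
        ring
  rw [uDivVOfBeta, uDivVOfBeta, div_le_div_iff₀ (by positivity) (by positivity)]
  linear_combination 9 * b * h_cross

end Monotonicity

theorem V_and_UoverV_bounds_general {φ β₁ b c : ℝ} (hb : 0 < b)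
    (hbβ₂ : b ≤ 3 * (1 - φ) - 2 * β₁) (hβ₃ : 0 < β₁ - 2 + 3 * φ) (hβ₃c : β₁ - 2 + 3 * φ ≤ c)
    (h_deriv : 3 * c * (b + c) ≤ b * (2 - b)) :
    1 + b ^ 2 / (3 * c * (2 * b + 3 * c)) ≤ Vfun φ β₁ ∧
      Ufun φ β₁ / Vfun φ β₁ ≤ 9 * (2 * (1 - c) - b) * c ^ 2 / (b * (b + 3 * c) ^ 2) := by
  have h_num : 0 ≤ 2 * (1 - (β₁ - 2 + 3 * φ)) - b := by
    have hc : 0 < c := hβ₃.trans_le hβ₃c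
    have h_pos : 0 < b * c + 3 * c ^ 2 := by positivity
    have h_mul : 0 ≤ b * (2 * (1 - c) - b) := by linear_combination h_deriv + h_pos
    linarith [nonneg_of_mul_nonneg_right h_mul hb]
  constructor
  · rw [Vfun_eq_vOfBeta]
    exact vOfBeta_le_vOfBeta hb hbβ₂ hβ₃ hβ₃c
  · rw [Ufun_eq_uOfBeta, Vfun_eq_vOfBeta, uOfBeta_div_vOfBeta (hb.trans_le hbβ₂) hβ₃]
    exact (uDivVOfBeta_anti_left hb hbβ₂ hβ₃.le h_num).trans
      (uDivVOfBeta_mono_right hb hβ₃.le hβ₃c h_deriv)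

/-- bounds on `V` and `U/V` over the constraint polygon `D`:
`V ≥ 1 + 0.33018²/(3·0.21782·(2·0.33018 + 3·0.21782))` and
`U/V ≤ 9(2(1 − 0.21782) − 0.33018)·0.21782²/(0.33018·(0.33018 + 3·0.21782)²)`. -/
theorem V_and_UoverV_bounds (φ β₁ : ℝ) (hD : (φ, β₁) ∈ Dset) :
    1 + 0.33018 ^ 2 / (3 * 0.21782 * (2 * 0.33018 + 3 * 0.21782)) ≤ Vfun φ β₁ ∧
      Ufun φ β₁ / Vfun φ β₁ ≤
        9 * (2 * (1 - 0.21782) - 0.33018) * 0.21782 ^ 2 /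
          (0.33018 * (0.33018 + 3 * 0.21782) ^ 2) := by
  obtain ⟨-, -, -, -, hβ₂, -, hβ₃, hβ₃'⟩ := hD
  exact V_and_UoverV_bounds_general (by norm_num) hβ₂ (lt_of_lt_of_le (by norm_num) hβ₃) hβ₃'
    (by norm_num)
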